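/- arXiv:2309.02372 — 2 statements merged into one kernel-verified Lean document; each statement's English description precedes it below -/
import Mathlib

section
/- Let R be a commutative noetherian ring, A a finite R-algebra, and M a finitely generated A-module. If the evaluation map M_p → Hom_{(A_p)^op}(Hom_{A_p}(M_p, A_p), A_p) is an isomorphism and the corresponding Ext vanishing holds for all prime ideals p of R, then M is Gorenstein projective over A; conversely if M is Gorenstein projective over A then M_p is Gorenstein projective over A_p for all primes p of R. -/
open CategoryTheory Opposite

/-- Vanishing of `Ext^i_A(M, N)` for left modules over a (possibly noncommutative)
ring `A`, computed in the abelian category of `A`-modules. -/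
noncomputable def extVan (A : Type) [Ring A] (M N : Type) [AddCommGroup M] [Module A M]
    [AddCommGroup N] [Module A N] (i : ℕ) : Prop :=
  Subsingleton ((((Ext ℤ (ModuleCat.{0} A) i).obj (op (ModuleCat.of A M))).obj
    (ModuleCat.of A N)) : Type)

/-- The canonical evaluation (biduality) map `M → Hom_{Aᵒᵖ}(Hom_A(M, A), A)`. -/
def evalBidual (A : Type) [Ring A] (M : Type) [AddCommGroup M] [Module A M] :
    M →ₗ[A] ((M →ₗ[A] A) →ₗ[Aᵐᵒᵖ] A) where
  toFun m :=
    { toFun := fun f => f m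
      map_add' := fun f g => rfl
      map_smul' := fun c f => rfl }
  map_add' m n := by ext f; simp
  map_smul' a m := by ext f; simp

/-- A module `M` over a ring `A` is totally reflexive (finitely generated Gorenstein
projective) if `Ext^i_A(M, A) = 0` and `Ext^i_{Aᵒᵖ}(Hom_A(M, A), A) = 0` for all `i > 0`
and the evaluation map `M → Hom_{Aᵒᵖ}(Hom_A(M, A), A)` is bijective. -/
noncomputable def IsTotallyReflexive (A : Type) [Ring A] (M : Type) [AddCommGroup M]
    [Module A M] : Prop :=
  (∀ i > 0, extVan A M A i) ∧
  (∀ i > 0, extVan Aᵐᵒᵖ (M →ₗ[A] A) A i) ∧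
  Function.Bijective (evalBidual A M)
section Localized

open TensorProduct

variable (R : Type) [CommRing R] (A : Type) [Ring A] [Algebra R A]
  (p : Ideal R) [p.IsPrime]
  (M : Type) [AddCommGroup M] [Module A M] [Module R M] [IsScalarTower R A M]
  [SMulCommClass R A M]

/-- `lTensor` with the localization, as a ring homomorphism on endomorphisms. -/
noncomputable def lTensorRingHom :
    Module.End R M →+* Module.End R (Localization.AtPrime p ⊗[R] M) where
  toFun f := LinearMap.lTensor (Localization.AtPrime p) f
  map_one' := LinearMap.lTensor_id _ _
  map_mul' f g := LinearMap.lTensor_comp _ f g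
  map_zero' := LinearMap.lTensor_zero _
  map_add' := LinearMap.lTensor_add _

/-- The `A`-module structure on `M_p = R_p ⊗_R M` (acting on the second factor). -/
noncomputable instance (priority := 50) locAModule : Module A (Localization.AtPrime p ⊗[R] M) :=
  Module.compHom _ ((lTensorRingHom R p M).comp (Algebra.lsmul R R M).toRingHom)

theorem locA_smul_tmul (a : A) (c : Localization.AtPrime p) (m : M) :
    a • (c ⊗ₜ[R] m) = c ⊗ₜ[R] (a • m) := rfl

noncomputable instance locTower : IsScalarTower R A (Localization.AtPrime p ⊗[R] M) := by
  constructor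
  intro r a x
  induction x using TensorProduct.induction_on with
  | zero => rw [smul_zero, smul_zero]; exact (smul_zero r).symm
  | tmul c m =>
      rw [show (r • a) • (c ⊗ₜ[R] m) = c ⊗ₜ[R] ((r • a) • m) from rfl,
        locA_smul_tmul, smul_assoc, TensorProduct.smul_tmul', ← TensorProduct.smul_tmul]
  | add x y hx hy => rw [smul_add, smul_add, smul_add, hx, hy]

noncomputable instance locComm :
    SMulCommClass (Localization.AtPrime p) A (Localization.AtPrime p ⊗[R] M) := by
  constructor
  intro c a x
  induction x using TensorProduct.induction_on with
  | zero => rw [smul_zero, smul_zero, smul_zero]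
  | tmul d m =>
      rw [locA_smul_tmul, TensorProduct.smul_tmul', TensorProduct.smul_tmul',
        show a • ((c • d) ⊗ₜ[R] m) = (c • d) ⊗ₜ[R] (a • m) from rfl]
  | add x y hx hy => rw [smul_add, smul_add, smul_add, smul_add, hx, hy]

/-- The module structure on `M_p = R_p ⊗_R M` over `A_p = R_p ⊗_R A`. -/
noncomputable instance locModule :
    Module (Localization.AtPrime p ⊗[R] A) (Localization.AtPrime p ⊗[R] M) :=
  @TensorProduct.Algebra.module R (Localization.AtPrime p) A
    (Localization.AtPrime p ⊗[R] M) _ _ _ _ _ TensorProduct.leftModule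
    (locAModule R A p M) _ _ (TensorProduct.isScalarTower_left)
    (locTower R A p M) (locComm R A p M)

end Localized

set_option linter.unusedSectionVars false

section ExtCriterion

open CategoryTheory Limits

variable {A : Type} [Ring A] {M : Type} [AddCommGroup M] [Module A M]
  (P : ℕ → Type) [∀ n, AddCommGroup (P n)] [∀ n, Module A (P n)]
  [∀ n, Module.Projective A (P n)] (d : ∀ n, P (n + 1) →ₗ[A] P n) (ε : P 0 →ₗ[A] M)

/-- The chain complex attached to an explicit exact sequence. -/
noncomputable def resComplex (hd : ∀ n, Function.Exact (d (n + 1)) (d n)) :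
    ChainComplex (ModuleCat.{0} A) ℕ :=
  ChainComplex.of (fun n => ModuleCat.of A (P n)) (fun n => ModuleCat.ofHom (d n))
    (fun n => by
      ext x
      exact (hd n).apply_apply_eq_zero x)

theorem resComplex_d (hd : ∀ n, Function.Exact (d (n + 1)) (d n)) (n : ℕ) : (resComplex P d hd).d (n + 1) n = ModuleCat.ofHom (d n) :=
  ChainComplex.of_d (fun n => ModuleCat.of A (P n)) (fun n => ModuleCat.ofHom (d n)) n

theorem resComplex_comp (h0 : Function.Exact (d 0) ε)
    (hd : ∀ n, Function.Exact (d (n + 1)) (d n)) :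
    (resComplex P d hd).d 1 0 ≫ ModuleCat.ofHom ε = 0 := by
  rw [resComplex_d]
  ext x
  exact h0.apply_apply_eq_zero x

theorem resComplex_exactAt (hd : ∀ n, Function.Exact (d (n + 1)) (d n)) (n : ℕ) : (resComplex P d hd).ExactAt (n + 1) := by
  rw [HomologicalComplex.exactAt_iff' _ (n + 1 + 1) (n + 1) n (by simp) (by simp)]
  rw [ShortComplex.moduleCat_exact_iff]
  intro x hx
  have hx' : ((resComplex P d hd).d (n+1) n) x = 0 := hx
  rw [resComplex_d] at hx'
  obtain ⟨y, hy⟩ := (hd n x).1 hx'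
  refine ⟨y, ?_⟩
  change ((resComplex P d hd).d (n+1+1) (n+1)) y = x
  rw [resComplex_d]
  exact hy

/-- The projective resolution attached to an explicit exact sequence. -/
noncomputable def resOf (hε : Function.Surjective ε) (h0 : Function.Exact (d 0) ε)
    (hd : ∀ n, Function.Exact (d (n + 1)) (d n)) : ProjectiveResolution (ModuleCat.of A M) where
  complex := resComplex P d hd
  projective n := by
    change Projective (ModuleCat.of A (P n))
    infer_instance
  π := (ChainComplex.toSingle₀Equiv _ _).symm ⟨ModuleCat.ofHom ε, resComplex_comp P d ε h0 hd⟩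
  quasiIso := ⟨fun n => by
    cases n
    · rw [ChainComplex.quasiIsoAt₀_iff, ShortComplex.quasiIso_iff_of_zeros']
      · refine (ShortComplex.exact_and_epi_g_iff_of_iso
          (S₂ := ShortComplex.mk (ModuleCat.ofHom (d 0)) (ModuleCat.ofHom ε) (by
            ext x; exact h0.apply_apply_eq_zero x)) ?_).2
          ⟨ModuleCat.shortComplex_exact _ h0, (ModuleCat.epi_iff_surjective _).2 hε⟩
        exact ShortComplex.isoMk (Iso.refl _) (Iso.refl _) (Iso.refl _)
          ((Category.id_comp _).trans ((resComplex_d P d hd 0).symm.trans (Category.comp_id _).symm))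
          ((Category.id_comp _).trans ((ChainComplex.toSingle₀Equiv_symm_apply_f_zero
            (C := resComplex P d hd) (X := ModuleCat.of A M) (ModuleCat.ofHom ε)
              (resComplex_comp P d ε h0 hd)).symm.trans
            (Category.comp_id _).symm))
      all_goals rfl
    · rw [quasiIsoAt_iff_exactAt']
      · apply resComplex_exactAt
      · apply ChainComplex.exactAt_succ_single_obj⟩

theorem extVan_iff (hε : Function.Surjective ε) (h0 : Function.Exact (d 0) ε)
    (hd : ∀ n, Function.Exact (d (n + 1)) (d n)) (N : Type) [AddCommGroup N] [Module A N] (i : ℕ) :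
    extVan A M N (i + 1) ↔
      ∀ g : P (i + 1) →ₗ[A] N, g ∘ₗ d (i + 1) = 0 → ∃ h : P i →ₗ[A] N, h ∘ₗ d i = g := by
  unfold extVan
  rw [← ModuleCat.isZero_iff_subsingleton (R := ℤ),
    ((resOf P d ε hε h0 hd).isoExt (R := ℤ) (i + 1) (ModuleCat.of A N)).isZero_iff,
    ← HomologicalComplex.exactAt_iff_isZero_homology,
    HomologicalComplex.exactAt_iff' _ i (i + 1) (i + 2) (by simp) (by simp),
    ShortComplex.moduleCat_exact_iff]
  constructor
  · intro H g hg
    obtain ⟨h, hh⟩ := H (ModuleCat.ofHom g : ModuleCat.of A (P (i+1)) ⟶ ModuleCat.of A N) (by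
      change (resComplex P d hd).d (i+2) (i+1) ≫ ModuleCat.ofHom g = 0
      rw [resComplex_d]
      ext x
      exact LinearMap.congr_fun hg x)
    change ModuleCat.of A (P i) ⟶ ModuleCat.of A N at h
    change (resComplex P d hd).d (i+1) (i) ≫ h = _ at hh
    rw [resComplex_d] at hh
    refine ⟨h.hom, ?_⟩
    have := congrArg ModuleCat.Hom.hom hh
    exact this
  · intro H g hg
    change ModuleCat.of A (P (i+1)) ⟶ ModuleCat.of A N at g
    change (resComplex P d hd).d (i+2) (i+1) ≫ g = 0 at hg
    rw [resComplex_d] at hg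
    obtain ⟨h, hh⟩ := H g.hom (congrArg ModuleCat.Hom.hom hg)
    refine ⟨(ModuleCat.ofHom h : ModuleCat.of A (P i) ⟶ ModuleCat.of A N), ?_⟩
    change (resComplex P d hd).d (i+1) i ≫ ModuleCat.ofHom h = g
    rw [resComplex_d]
    ext x
    exact LinearMap.congr_fun hh x

end ExtCriterion

section TotReflLocal

open TensorProduct

section HomLoc

variable {R : Type} [CommRing R] (S : Submonoid R)
  {A A' : Type} [Ring A] [Algebra R A] [Ring A'] [Algebra R A']
  (φ : A →ₐ[R] A') (hφ : IsLocalizedModule S φ.toLinearMap)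
  {M M' : Type} [AddCommGroup M] [Module A M] [Module R M] [IsScalarTower R A M]
  [AddCommGroup M'] [Module A' M'] [Module R M'] [IsScalarTower R A' M']
  (f : M →ₗ[R] M') [IsLocalizedModule S f] (hf : ∀ (a : A) (m : M), f (a • m) = φ a • f m)
  {N N' : Type} [AddCommGroup N] [Module A N] [Module R N] [IsScalarTower R A N]
  [AddCommGroup N'] [Module A' N'] [Module R N'] [IsScalarTower R A' N']
  (g : N →ₗ[R] N') [IsLocalizedModule S g] (hg : ∀ (a : A) (m : N), g (a • m) = φ a • g m)

theorem homLoc_aux (hφ : IsLocalizedModule S φ.toLinearMap)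
    (hf : ∀ (a : A) (m : M), f (a • m) = φ a • f m)
    (hg : ∀ (a : A) (m : N), g (a • m) = φ a • g m)
    (v : M →ₗ[A] N) (a' : A') (x : M') :
    IsLocalizedModule.map S f g (v.restrictScalars R) (a' • x) =
      a' • IsLocalizedModule.map S f g (v.restrictScalars R) x := by
  obtain ⟨⟨a, s⟩, hs⟩ := IsLocalizedModule.surj S φ.toLinearMap a'
  obtain ⟨⟨m, t⟩, ht⟩ := IsLocalizedModule.surj S f x
  set u := IsLocalizedModule.map S f g (v.restrictScalars R) with hu
  have hum : ∀ m, u (f m) = g (v m) := fun m => by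
    rw [hu, IsLocalizedModule.map_apply]; rfl
  simp only [Submonoid.smul_def] at hs ht
  apply IsLocalizedModule.smul_injective g (s * t)
  simp only [Submonoid.smul_def, Submonoid.coe_mul]
  have e1 : ((s : R) * (t : R)) • (a' • x) = f (a • m) := by
    rw [hf, ← ht, ← smul_smul, smul_comm (t : R) a' x, ← smul_assoc, hs]; rfl
  have e2 : ((s : R) * (t : R)) • (a' • u x) = g (a • v m) := by
    rw [hg, ← hum, ← ht, map_smul, ← smul_smul, smul_comm (t : R) a' (u x), ← smul_assoc, hs]; rfl
  rw [← map_smul, e1, e2, hum, map_smul]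

/-- Localization of homomorphisms over a noncommutative algebra. -/
noncomputable def homLoc (hφ : IsLocalizedModule S φ.toLinearMap)
    (hf : ∀ (a : A) (m : M), f (a • m) = φ a • f m)
    (hg : ∀ (a : A) (m : N), g (a • m) = φ a • g m) :
    (M →ₗ[A] N) →ₗ[R] (M' →ₗ[A'] N') where
  toFun v :=
    { toFun := IsLocalizedModule.map S f g (v.restrictScalars R)
      map_add' := map_add _
      map_smul' := homLoc_aux S φ f g hφ hf hg v }
  map_add' v w := by
    ext x
    change IsLocalizedModule.map S f g (v.restrictScalars R + w.restrictScalars R) x = _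
    rw [map_add]; rfl
  map_smul' r v := by
    ext x
    change IsLocalizedModule.map S f g (r • v.restrictScalars R) x = _
    rw [map_smul]; rfl

theorem homLoc_apply (hφ : IsLocalizedModule S φ.toLinearMap)
    (hf : ∀ (a : A) (m : M), f (a • m) = φ a • f m)
    (hg : ∀ (a : A) (m : N), g (a • m) = φ a • g m) (v : M →ₗ[A] N) (m : M) :
    homLoc S φ f g hφ hf hg v (f m) = g (v m) := by
  change IsLocalizedModule.map S f g (v.restrictScalars R) (f m) = _
  rw [IsLocalizedModule.map_apply]; rfl

theorem hom_ext_loc (T : Submonoid R) (f : M →ₗ[R] M') [IsLocalizedModule T f]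
    (g : N →ₗ[R] N') [IsLocalizedModule T g] {u w : M' →ₗ[A'] N'} (h : ∀ m, u (f m) = w (f m)) : u = w := by
  have : u.restrictScalars R = w.restrictScalars R :=
    IsLocalizedModule.linearMap_ext T f g (LinearMap.ext h)
  ext x
  exact LinearMap.congr_fun this x

theorem homLoc_isLocalized [IsNoetherianRing R] [Module.Finite R A] [Module.Finite R M]
    (hφ : IsLocalizedModule S φ.toLinearMap)
    (hf : ∀ (a : A) (m : M), f (a • m) = φ a • f m)
    (hg : ∀ (a : A) (m : N), g (a • m) = φ a • g m) :
    IsLocalizedModule S (homLoc S φ f g hφ hf hg) where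
  map_units s := by
    have hb : Function.Bijective (fun x : N' => (s : R) • x) :=
      (Module.End.isUnit_iff _).1 (IsLocalizedModule.map_units g s)
    rw [Module.End.isUnit_iff]
    constructor
    · intro u w h
      ext x
      exact hb.1 (LinearMap.congr_fun h x)
    · intro u
      let e : N' ≃ₗ[A'] N' := LinearEquiv.ofBijective ((s : R) • LinearMap.id) hb
      refine ⟨e.symm.toLinearMap ∘ₗ u, ?_⟩
      ext x
      exact e.apply_symm_apply (u x)
  surj u := by
    have := Module.finitePresentation_of_finite R M
    obtain ⟨h, s, hs⟩ := Module.FinitePresentation.exists_lift_of_isLocalizedModule S g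
      ((u.restrictScalars R) ∘ₗ f)
    have hs' : ∀ m, g (h m) = (s : R) • u (f m) := fun m => LinearMap.congr_fun hs m
    let B₁ : TensorProduct R A M →ₗ[R] N := TensorProduct.lift
      (LinearMap.mk₂ R (fun a m => h (a • m)) (by intros; simp [add_smul]) (by intros; simp)
        (by intros; simp) (by intro r a m; rw [smul_comm, map_smul]))
    let B₂ : TensorProduct R A M →ₗ[R] N := TensorProduct.lift
      (LinearMap.mk₂ R (fun a m => a • h m) (by intros; simp [add_smul]) (by intros; simp)
        (by intros; simp) (by intro r a m; rw [map_smul, smul_comm]))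
    obtain ⟨t, ht⟩ := Module.Finite.exists_smul_of_comp_eq_of_isLocalizedModule S g B₁ B₂ (by
      ext a m
      change g (h (a • m)) = g (a • h m)
      rw [hs', hg, hs', hf, map_smul, smul_comm])
    let v : M →ₗ[A] N :=
      { toFun := fun m => (t : R) • h m
        map_add' := by intros; simp
        map_smul' := fun a m => by
          have : (t : R) • h (a • m) = (t : R) • a • h m :=
            LinearMap.congr_fun ht (a ⊗ₜ m)
          rw [this, RingHom.id_apply, smul_comm] }
    refine ⟨⟨v, t * s⟩, ?_⟩
    refine hom_ext_loc S f g fun m => ?_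
    rw [homLoc_apply]
    change ((t : R) * (s : R)) • u (f m) = g ((t : R) • h m)
    rw [map_smul, hs', smul_smul]
  exists_of_eq {v w} h := by
    obtain ⟨t, ht⟩ := Module.Finite.exists_smul_of_comp_eq_of_isLocalizedModule S g
      (v.restrictScalars R) (w.restrictScalars R) (by
        ext m
        change g (v m) = g (w m)
        rw [← homLoc_apply S φ f g hφ hf hg, h, homLoc_apply])
    refine ⟨t, ?_⟩
    ext m
    exact LinearMap.congr_fun ht m

end HomLoc

section Resolution

/-- A map between finite free modules, with its ranks. -/
structure FreeMap (A : Type) [Ring A] where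
  k : ℕ
  l : ℕ
  d : (Fin l → A) →ₗ[A] (Fin k → A)

theorem FreeMap.exists_next {A : Type} [Ring A] [IsNoetherianRing A] (x : FreeMap A) :
    ∃ (n : ℕ) (e : (Fin n → A) →ₗ[A] (Fin x.l → A)), Function.Exact e x.d := by
  obtain ⟨n, e, he⟩ := Module.Finite.exists_fin' A (LinearMap.ker x.d)
  refine ⟨n, (LinearMap.ker x.d).subtype ∘ₗ e, ?_⟩
  rw [LinearMap.exact_iff, LinearMap.range_comp, LinearMap.range_eq_top.2 he]
  simp

/-- The next step in a resolution. -/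
noncomputable def FreeMap.next {A : Type} [Ring A] [IsNoetherianRing A] (x : FreeMap A) :
    FreeMap A :=
  ⟨x.l, x.exists_next.choose, x.exists_next.choose_spec.choose⟩

theorem exists_res (A : Type) [Ring A] [IsNoetherianRing A] (M : Type) [AddCommGroup M]
    [Module A M] [Module.Finite A M] :
    ∃ (k : ℕ → ℕ) (d : ∀ n, (Fin (k (n + 1)) → A) →ₗ[A] (Fin (k n) → A))
      (ε : (Fin (k 0) → A) →ₗ[A] M), Function.Surjective ε ∧ Function.Exact (d 0) ε ∧
        ∀ n, Function.Exact (d (n + 1)) (d n) := by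
  obtain ⟨k₀, ε, hε⟩ := Module.Finite.exists_fin' A M
  obtain ⟨l, e, he⟩ := Module.Finite.exists_fin' A (LinearMap.ker ε)
  let x₀ : FreeMap A := ⟨k₀, l, (LinearMap.ker ε).subtype ∘ₗ e⟩
  let x : ℕ → FreeMap A := fun n => Nat.rec x₀ (fun _ y => y.next) n
  refine ⟨fun n => (x n).k, fun n => (x n).d, ε, hε, ?_, fun n => ?_⟩
  · change Function.Exact ((LinearMap.ker ε).subtype ∘ₗ e) ε
    rw [LinearMap.exact_iff, LinearMap.range_comp, LinearMap.range_eq_top.2 he]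
    simp
  · exact (x n).exists_next.choose_spec.choose_spec

end Resolution

section LocalIff

theorem exact_map_iff {R : Type} [CommRing R] (S : Submonoid R)
    {H₀ H₁ H₂ K₀ K₁ K₂ : Type} [AddCommGroup H₀] [AddCommGroup H₁] [AddCommGroup H₂]
    [Module R H₀] [Module R H₁] [Module R H₂]
    [AddCommGroup K₀] [AddCommGroup K₁] [AddCommGroup K₂]
    [Module R K₀] [Module R K₁] [Module R K₂]
    (f₀ : H₀ →ₗ[R] K₀) (f₁ : H₁ →ₗ[R] K₁) (f₂ : H₂ →ₗ[R] K₂)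
    (h₀ : IsLocalizedModule S f₀) (h₁ : IsLocalizedModule S f₁) (h₂ : IsLocalizedModule S f₂)
    (F : H₀ →ₗ[R] H₁) (G : H₁ →ₗ[R] H₂) (F' : K₀ →ₗ[R] K₁) (G' : K₁ →ₗ[R] K₂)
    (hF : ∀ x, F' (f₀ x) = f₁ (F x)) (hG : ∀ x, G' (f₁ x) = f₂ (G x)) :
    Function.Exact F' G' ↔
      Function.Exact (LocalizedModule.map S F) (LocalizedModule.map S G) := by
  have e1 : F' = IsLocalizedModule.map S f₀ f₁ F :=
    IsLocalizedModule.linearMap_ext S f₀ f₁ (by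
      ext x; simp [hF])
  have e2 : G' = IsLocalizedModule.map S f₁ f₂ G :=
    IsLocalizedModule.linearMap_ext S f₁ f₂ (by
      ext x; simp [hG])
  rw [e1, e2]
  exact (Function.Exact.iff_of_ladder_linearEquiv
    (IsLocalizedModule.map_iso_commute S f₀ f₁ F) (IsLocalizedModule.map_iso_commute S f₁ f₂ G))

theorem bij_map_iff {R : Type} [CommRing R] (S : Submonoid R)
    {H₀ H₁ K₀ K₁ : Type} [AddCommGroup H₀] [AddCommGroup H₁]
    [Module R H₀] [Module R H₁] 
    [AddCommGroup K₀] [AddCommGroup K₁] [Module R K₀] [Module R K₁]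
    (f₀ : H₀ →ₗ[R] K₀) (f₁ : H₁ →ₗ[R] K₁)
    (h₀ : IsLocalizedModule S f₀) (h₁ : IsLocalizedModule S f₁)
    (F : H₀ →ₗ[R] H₁) (F' : K₀ →ₗ[R] K₁)
    (hF : ∀ x, F' (f₀ x) = f₁ (F x)) :
    Function.Bijective F' ↔ Function.Bijective (LocalizedModule.map S F) := by
  have e1 : F' = IsLocalizedModule.map S f₀ f₁ F :=
    IsLocalizedModule.linearMap_ext S f₀ f₁ (by
      ext x; simp [hF])
  rw [e1]
  have := IsLocalizedModule.map_iso_commute S f₀ f₁ F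
  rw [← EquivLike.comp_bijective _ (IsLocalizedModule.iso S f₁),
    ← EquivLike.bijective_comp (IsLocalizedModule.iso S f₀) (IsLocalizedModule.map S f₀ f₁ F)]
  have h2 := congrArg (fun l : _ →ₗ[R] _ => (l : _ → _)) this
  exact Eq.to_iff (congrArg Function.Bijective h2)

end LocalIff

section ExtLocal

/-- Precomposition as an `R`-linear map on homs. -/
def preComp (R : Type) [CommRing R] {A : Type} [Ring A] [Algebra R A]
    {P Q : Type} [AddCommGroup P] [Module A P] [AddCommGroup Q] [Module A Q] (d : P →ₗ[A] Q)
    (N : Type) [AddCommGroup N] [Module A N] [Module R N] [IsScalarTower R A N] :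
    (Q →ₗ[A] N) →ₗ[R] (P →ₗ[A] N) where
  toFun h := h ∘ₗ d
  map_add' _ _ := rfl
  map_smul' _ _ := rfl

theorem extVan_iff_exact (R : Type) [CommRing R]
    {A : Type} [Ring A] [Algebra R A] {M : Type} [AddCommGroup M] [Module A M]
    (k : ℕ → ℕ) (d : ∀ n, (Fin (k (n + 1)) → A) →ₗ[A] (Fin (k n) → A))
    (ε : (Fin (k 0) → A) →ₗ[A] M) (hε : Function.Surjective ε) (h0 : Function.Exact (d 0) ε)
    (hd : ∀ n, Function.Exact (d (n + 1)) (d n))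
    (N : Type) [AddCommGroup N] [Module A N] [Module R N] [IsScalarTower R A N] (i : ℕ) :
    extVan A M N (i + 1) ↔ Function.Exact (preComp R (d i) N) (preComp R (d (i + 1)) N) := by
  rw [extVan_iff (fun n => Fin (k n) → A) d ε hε h0 hd]
  constructor
  · intro H g
    refine ⟨fun hg => H g hg, ?_⟩
    rintro ⟨h, rfl⟩
    refine LinearMap.ext fun x => ?_
    change h (d i (d (i + 1) x)) = 0
    rw [(hd i).apply_apply_eq_zero, map_zero]
  · intro H g hg
    exact (H g).1 hg

theorem extVan_loc_iff {R : Type} [CommRing R] [IsNoetherianRing R] (S : Submonoid R)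
    {A A' : Type} [Ring A] [Algebra R A] [Module.Finite R A] [Ring A'] [Algebra R A']
    (φ : A →ₐ[R] A') (hφ : IsLocalizedModule S φ.toLinearMap)
    {M M' : Type} [AddCommGroup M] [Module A M] [Module R M] [IsScalarTower R A M]
    [AddCommGroup M'] [Module A' M'] [Module R M'] [IsScalarTower R A' M']
    (f : M →ₗ[R] M') [IsLocalizedModule S f] (hf : ∀ (a : A) (m : M), f (a • m) = φ a • f m)
    {N N' : Type} [AddCommGroup N] [Module A N] [Module R N] [IsScalarTower R A N]
    [AddCommGroup N'] [Module A' N'] [Module R N'] [IsScalarTower R A' N']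
    (g : N →ₗ[R] N') [IsLocalizedModule S g] (hg : ∀ (a : A) (m : N), g (a • m) = φ a • g m)
    (k : ℕ → ℕ) (d : ∀ n, (Fin (k (n + 1)) → A) →ₗ[A] (Fin (k n) → A))
    (ε : (Fin (k 0) → A) →ₗ[A] M) (hε : Function.Surjective ε) (h0 : Function.Exact (d 0) ε)
    (hd : ∀ n, Function.Exact (d (n + 1)) (d n)) (i : ℕ) :
    extVan A' M' N' (i + 1) ↔ Function.Exact (LocalizedModule.map S (preComp R (d i) N))
      (LocalizedModule.map S (preComp R (d (i + 1)) N)) := by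
  let ψ : ∀ n, (Fin n → A) →ₗ[R] (Fin n → A') := fun n =>
    .pi fun i => φ.toLinearMap ∘ₗ .proj i
  have hψ : ∀ n (a : A) (m : Fin n → A), ψ n (a • m) = φ a • ψ n m := by
    intro n a m
    ext j
    change φ (a * m j) = φ a * φ (m j)
    rw [map_mul]
  have hψl : ∀ n, IsLocalizedModule S (ψ n) := fun n =>
    IsLocalizedModule.pi S (fun _ : Fin n => φ.toLinearMap)
  let d' : ∀ n, (Fin (k (n + 1)) → A') →ₗ[A'] (Fin (k n) → A') := fun n =>
    homLoc S φ (ψ (k (n + 1))) (ψ (k n)) hφ (hψ _) (hψ _) (d n)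
  let ε' : (Fin (k 0) → A') →ₗ[A'] M' := homLoc S φ (ψ (k 0)) f hφ (hψ _) hf ε
  have hε' : Function.Surjective ε' :=
    IsLocalizedModule.map_surjective S (ψ (k 0)) f (ε.restrictScalars R) hε
  have h0' : Function.Exact (d' 0) ε' :=
    IsLocalizedModule.map_exact S (ψ (k (0 + 1))) (ψ (k 0)) f
      ((d 0).restrictScalars R) (ε.restrictScalars R) h0
  have hd' : ∀ n, Function.Exact (d' (n + 1)) (d' n) := fun n =>
    IsLocalizedModule.map_exact S (ψ (k (n + 1 + 1))) (ψ (k (n + 1))) (ψ (k n))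
      ((d (n + 1)).restrictScalars R) ((d n).restrictScalars R) (hd n)
  rw [extVan_iff_exact R k d' ε' hε' h0' hd']
  let L : ∀ n, ((Fin (k n) → A) →ₗ[A] N) →ₗ[R] ((Fin (k n) → A') →ₗ[A'] N') := fun n =>
    homLoc S φ (ψ (k n)) g hφ (hψ _) hg
  have hL : ∀ n, IsLocalizedModule S (L n) := fun n =>
    homLoc_isLocalized S φ (ψ (k n)) g hφ (hψ _) hg
  have hc : ∀ n x, preComp R (d' n) N' (L n x) = L (n + 1) (preComp R (d n) N x) := by
    intro n x
    refine hom_ext_loc S (ψ (k (n + 1))) g fun m => ?_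
    change homLoc S φ (ψ (k n)) g hφ (hψ _) hg x
      (homLoc S φ (ψ (k (n + 1))) (ψ (k n)) hφ (hψ _) (hψ _) (d n) (ψ _ m)) =
      homLoc S φ (ψ (k (n + 1))) g hφ (hψ _) hg (x ∘ₗ d n) (ψ _ m)
    rw [homLoc_apply, homLoc_apply, homLoc_apply]
    rfl
  exact exact_map_iff S (L i) (L (i + 1)) (L (i + 2)) (hL _) (hL _) (hL _) _ _ _ _ (hc i)
    (hc (i + 1))

end ExtLocal

section Final

variable (R : Type) [CommRing R]

theorem op_tower (A : Type) [Ring A] [Algebra R A] : IsScalarTower R Aᵐᵒᵖ A :=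
  ⟨fun r a b => by
    change b * (r • a.unop) = r • (b * a.unop)
    rw [mul_smul_comm]⟩

attribute [local instance] op_tower

theorem op_finite (A : Type) [Ring A] [Algebra R A] [Module.Finite R A] :
    Module.Finite R Aᵐᵒᵖ :=
  Module.Finite.equiv (MulOpposite.opLinearEquiv R : A ≃ₗ[R] Aᵐᵒᵖ)

theorem noeth_of_finite [IsNoetherianRing R] (A : Type) [Ring A] [Algebra R A]
    [Module.Finite R A] : IsNoetherianRing A :=
  isNoetherian_of_tower R (inferInstance : IsNoetherian R A)

theorem dual_finite [IsNoetherianRing R] (A : Type) [Ring A] [Algebra R A] [Module.Finite R A]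
    (M : Type) [AddCommGroup M] [Module A M] [Module.Finite A M] :
    Module.Finite R (M →ₗ[A] A) := by
  obtain ⟨n, e, he⟩ := Module.Finite.exists_fin' A M
  let L : (M →ₗ[A] A) →ₗ[R] (Fin n → A) :=
    { toFun := fun u j => u (e (Pi.single j 1))
      map_add' := fun _ _ => rfl
      map_smul' := fun _ _ => rfl }
  refine Module.Finite.of_injective L fun u w h => ?_
  have : u ∘ₗ e = w ∘ₗ e := by
    apply LinearMap.pi_ext'
    intro j
    ext
    exact congrFun h j
  ext m
  obtain ⟨x, rfl⟩ := he m
  exact LinearMap.congr_fun this x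

/-- Biduality as an `R`-linear map. -/
def evalR (A : Type) [Ring A] [Algebra R A] (M : Type) [AddCommGroup M] [Module A M]
    [Module R M] [IsScalarTower R A M] : M →ₗ[R] ((M →ₗ[A] A) →ₗ[Aᵐᵒᵖ] A) where
  toFun := evalBidual A M
  map_add' := map_add _
  map_smul' r m := by
    refine LinearMap.ext fun u => ?_
    change u (r • m) = r • u m
    rw [← algebraMap_smul A r m, map_smul, algebraMap_smul]

theorem op_localized (S : Submonoid R) {A A' : Type} [Ring A] [Algebra R A] [Ring A']
    [Algebra R A'] (φ : A →ₐ[R] A') (hφ : IsLocalizedModule S φ.toLinearMap) :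
    IsLocalizedModule S (AlgHom.op φ).toLinearMap := by
  have h1 : IsLocalizedModule S ((MulOpposite.opLinearEquiv R : A' ≃ₗ[R] A'ᵐᵒᵖ).toLinearMap ∘ₗ
    φ.toLinearMap) := inferInstance
  have h2 : IsLocalizedModule S (((MulOpposite.opLinearEquiv R : A' ≃ₗ[R] A'ᵐᵒᵖ).toLinearMap ∘ₗ
    φ.toLinearMap) ∘ₗ (MulOpposite.opLinearEquiv R : A ≃ₗ[R] Aᵐᵒᵖ).symm.toLinearMap) :=
    inferInstance
  exact h2

theorem totRefl_loc_iff [IsNoetherianRing R] (S : Submonoid R)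
    {A A' : Type} [Ring A] [Algebra R A] [Module.Finite R A] [Ring A'] [Algebra R A']
    (φ : A →ₐ[R] A') (hφ : IsLocalizedModule S φ.toLinearMap)
    {M M' : Type} [AddCommGroup M] [Module A M] [Module R M] [IsScalarTower R A M]
    [Module.Finite A M]
    [AddCommGroup M'] [Module A' M'] [Module R M'] [IsScalarTower R A' M']
    (f : M →ₗ[R] M') (hfl : IsLocalizedModule S f)
    (hf : ∀ (a : A) (m : M), f (a • m) = φ a • f m)
    (k : ℕ → ℕ) (d : ∀ n, (Fin (k (n + 1)) → A) →ₗ[A] (Fin (k n) → A))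
    (ε : (Fin (k 0) → A) →ₗ[A] M) (hε : Function.Surjective ε) (h0 : Function.Exact (d 0) ε)
    (hd : ∀ n, Function.Exact (d (n + 1)) (d n))
    (l : ℕ → ℕ) (e : ∀ n, (Fin (l (n + 1)) → Aᵐᵒᵖ) →ₗ[Aᵐᵒᵖ] (Fin (l n) → Aᵐᵒᵖ))
    (δ : (Fin (l 0) → Aᵐᵒᵖ) →ₗ[Aᵐᵒᵖ] (M →ₗ[A] A)) (hδ : Function.Surjective δ)
    (h0' : Function.Exact (e 0) δ) (he : ∀ n, Function.Exact (e (n + 1)) (e n)) :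
    IsTotallyReflexive A' M' ↔
      (∀ i, Function.Exact (LocalizedModule.map S (preComp R (d i) A))
        (LocalizedModule.map S (preComp R (d (i + 1)) A))) ∧
      (∀ i, Function.Exact (LocalizedModule.map S (preComp R (e i) A))
        (LocalizedModule.map S (preComp R (e (i + 1)) A))) ∧
      Function.Bijective (LocalizedModule.map S (evalR R A M)) := by
  have : Module.Finite R Aᵐᵒᵖ := op_finite R A
  have : Module.Finite R M := Module.Finite.trans A M
  have : Module.Finite R (M →ₗ[A] A) := dual_finite R A M
  have hmul : ∀ (a : A) (m : A), φ.toLinearMap (a • m) = φ a • φ.toLinearMap m :=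
    fun a m => map_mul φ a m
  have hmul' : ∀ (a : Aᵐᵒᵖ) (m : A), φ.toLinearMap (a • m) = (AlgHom.op φ) a • φ.toLinearMap m :=
    fun a m => map_mul φ m a.unop
  have hop := op_localized R S φ hφ
  let L : (M →ₗ[A] A) →ₗ[R] (M' →ₗ[A'] A') := homLoc S φ f φ.toLinearMap hφ hf hmul
  have hL : IsLocalizedModule S L := homLoc_isLocalized S φ f φ.toLinearMap hφ hf hmul
  have hLs : ∀ (a : Aᵐᵒᵖ) (u : M →ₗ[A] A), L (a • u) = (AlgHom.op φ) a • L u := by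
    intro a u
    refine hom_ext_loc S f φ.toLinearMap fun m => ?_
    change homLoc S φ f φ.toLinearMap hφ hf hmul (a • u) (f m) =
      homLoc S φ f φ.toLinearMap hφ hf hmul u (f m) * φ a.unop
    rw [homLoc_apply, homLoc_apply]
    exact map_mul φ _ _
  let B : ((M →ₗ[A] A) →ₗ[Aᵐᵒᵖ] A) →ₗ[R] ((M' →ₗ[A'] A') →ₗ[A'ᵐᵒᵖ] A') :=
    homLoc S (AlgHom.op φ) L φ.toLinearMap hop hLs hmul'
  have hB : IsLocalizedModule S B :=
    homLoc_isLocalized S (AlgHom.op φ) L φ.toLinearMap hop hLs hmul'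
  have hpos : ∀ Q : ℕ → Prop, (∀ i > 0, Q i) ↔ ∀ i, Q (i + 1) := fun Q =>
    ⟨fun h i => h _ (Nat.succ_pos i), fun h i hi => by
      obtain ⟨j, rfl⟩ := Nat.exists_eq_succ_of_ne_zero hi.ne'
      exact h j⟩
  unfold IsTotallyReflexive
  rw [hpos, hpos]
  refine and_congr (forall_congr' fun i => ?_) (and_congr (forall_congr' fun i => ?_) ?_)
  · exact extVan_loc_iff S φ hφ f hf φ.toLinearMap hmul k d ε hε h0 hd i
  · exact extVan_loc_iff S (AlgHom.op φ) hop L hLs φ.toLinearMap hmul' l e δ hδ h0' he i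
  · refine bij_map_iff S f B hfl hB (evalR R A M) (evalR R A' M') fun m => ?_
    refine hom_ext_loc S L φ.toLinearMap fun u => ?_
    change homLoc S φ f φ.toLinearMap hφ hf hmul u (f m) =
      homLoc S (AlgHom.op φ) L φ.toLinearMap hop hLs hmul' (evalR R A M m) (L u)
    rw [homLoc_apply, homLoc_apply]
    rfl

theorem totRefl_iff
    {A : Type} [Ring A] [Algebra R A]
    {M : Type} [AddCommGroup M] [Module A M] [Module R M] [IsScalarTower R A M]
    (k : ℕ → ℕ) (d : ∀ n, (Fin (k (n + 1)) → A) →ₗ[A] (Fin (k n) → A))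
    (ε : (Fin (k 0) → A) →ₗ[A] M) (hε : Function.Surjective ε) (h0 : Function.Exact (d 0) ε)
    (hd : ∀ n, Function.Exact (d (n + 1)) (d n))
    (l : ℕ → ℕ) (e : ∀ n, (Fin (l (n + 1)) → Aᵐᵒᵖ) →ₗ[Aᵐᵒᵖ] (Fin (l n) → Aᵐᵒᵖ))
    (δ : (Fin (l 0) → Aᵐᵒᵖ) →ₗ[Aᵐᵒᵖ] (M →ₗ[A] A)) (hδ : Function.Surjective δ)
    (h0' : Function.Exact (e 0) δ) (he : ∀ n, Function.Exact (e (n + 1)) (e n)) :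
    IsTotallyReflexive A M ↔
      (∀ i, Function.Exact (preComp R (d i) A) (preComp R (d (i + 1)) A)) ∧
      (∀ i, Function.Exact (preComp R (e i) A) (preComp R (e (i + 1)) A)) ∧
      Function.Bijective (evalR R A M) := by
  have hpos : ∀ Q : ℕ → Prop, (∀ i > 0, Q i) ↔ ∀ i, Q (i + 1) := fun Q =>
    ⟨fun h i => h _ (Nat.succ_pos i), fun h i hi => by
      obtain ⟨j, rfl⟩ := Nat.exists_eq_succ_of_ne_zero hi.ne'
      exact h j⟩
  unfold IsTotallyReflexive
  rw [hpos, hpos]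
  refine and_congr (forall_congr' fun i => ?_) (and_congr (forall_congr' fun i => ?_) Iff.rfl)
  · exact extVan_iff_exact R k d ε hε h0 hd A i
  · exact extVan_iff_exact R l e δ hδ h0' he A i

theorem loc_tower (A : Type) [Ring A] [Algebra R A] (p : Ideal R) [p.IsPrime]
    (M : Type) [AddCommGroup M] [Module A M] [Module R M] [IsScalarTower R A M]
    [SMulCommClass R A M] :
    IsScalarTower R (Localization.AtPrime p ⊗[R] A) (Localization.AtPrime p ⊗[R] M) := by
  constructor
  intro r x y
  induction x using TensorProduct.induction_on with
  | zero =>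
    have h : (0 : Localization.AtPrime p ⊗[R] A) • y = 0 :=
      Module.zero_smul (self := locModule R A p M) y
    rw [smul_zero]
    exact (h.trans (smul_zero r).symm).trans (congrArg (fun z => r • z) h.symm)
  | tmul c a => rw [TensorProduct.smul_tmul']; exact smul_assoc r c (a • y)
  | add x z hx hz => rw [smul_add, add_smul, add_smul, smul_add, hx, hz]

end Final

end TotReflLocal

open TensorProduct in
/-- let `R` be a commutative noetherian ring, `A` a finite `R`-algebra, and
`M` a finitely generated `A`-module.  Then `M` is Gorenstein projective (totally
reflexive) over `A` if and only if, for every prime ideal `p` of `R`, the localization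
`M_p = R_p ⊗_R M` is Gorenstein projective (totally reflexive) over
`A_p = R_p ⊗_R A`: the ascent direction says that if the evaluation map
`M_p → Hom_{(A_p)ᵒᵖ}(Hom_{A_p}(M_p, A_p), A_p)` is an isomorphism and the corresponding
`Ext`-vanishing holds for all primes `p`, then `M` is Gorenstein projective over `A`,
and the descent direction is the converse. -/
theorem totallyReflexive_local
    (R : Type) [CommRing R] [IsNoetherianRing R]
    (A : Type) [Ring A] [Algebra R A] [Module.Finite R A]
    (M : Type) [AddCommGroup M] [Module A M] [Module.Finite A M]
    [Module R M] [IsScalarTower R A M] [SMulCommClass R A M] :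
    IsTotallyReflexive A M ↔
      ∀ (p : Ideal R) (_ : p.IsPrime),
        IsTotallyReflexive (Localization.AtPrime p ⊗[R] A)
          (Localization.AtPrime p ⊗[R] M) := by
  have hA := noeth_of_finite R A
  have := op_finite R A
  have hA' := noeth_of_finite R Aᵐᵒᵖ
  have := dual_finite R A M
  have := op_tower R A
  have : Module.Finite Aᵐᵒᵖ (M →ₗ[A] A) := Module.Finite.of_restrictScalars_finite R _ _
  obtain ⟨k, d, ε, hε, h0, hd⟩ := exists_res A M
  obtain ⟨l, e, δ, hδ, h0', he⟩ := exists_res Aᵐᵒᵖ (M →ₗ[A] A)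
  have key : ∀ (p : Ideal R) (_ : p.IsPrime), _ := fun p hp =>
    have := loc_tower R A p M
    totRefl_loc_iff R p.primeCompl
      (Algebra.TensorProduct.includeRight : A →ₐ[R] Localization.AtPrime p ⊗[R] A)
      (inferInstance : IsLocalizedModule p.primeCompl
        (TensorProduct.mk R (Localization.AtPrime p) A 1))
      (TensorProduct.mk R (Localization.AtPrime p) M 1)
      (inferInstance : IsLocalizedModule p.primeCompl
        (TensorProduct.mk R (Localization.AtPrime p) M 1))
      (fun a m => by
        change _ = (1 : Localization.AtPrime p) • (a • ((1 : Localization.AtPrime p) ⊗ₜ[R] m))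
        rw [one_smul]; rfl)
      k d ε hε h0 hd l e δ hδ h0' he
  rw [totRefl_iff R k d ε hε h0 hd l e δ hδ h0' he]
  constructor
  · rintro ⟨h1, h2, h3⟩ p hp
    refine (key p hp).2 ⟨fun i => ?_, fun i => ?_, ?_⟩
    · exact LocalizedModule.map_exact _ _ _ (h1 i)
    · exact LocalizedModule.map_exact _ _ _ (h2 i)
    · exact ⟨LocalizedModule.map_injective _ _ h3.1, LocalizedModule.map_surjective _ _ h3.2⟩
  · intro H
    refine ⟨fun i => ?_, fun i => ?_, ?_⟩
    · exact exact_of_localized_maximal _ _ fun p hp =>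
        ((key p hp.isPrime).1 (H p hp.isPrime)).1 i
    · exact exact_of_localized_maximal _ _ fun p hp =>
        ((key p hp.isPrime).1 (H p hp.isPrime)).2.1 i
    · exact bijective_of_localized_maximal _ fun p hp =>
        ((key p hp.isPrime).1 (H p hp.isPrime)).2.2
end

section
/- Let R be a commutative noetherian ring, A a finite R-algebra, and M a finitely generated A-module. Then M is projective over A if and only if M_m is projective over A_m for every maximal ideal m of R. -/
section Helpers

open TensorProduct

theorem loc_smul_tmul
    (R : Type) [CommRing R] (A : Type) [Ring A] [Algebra R A]
    (p : Ideal R) [p.IsPrime]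
    (M : Type) [AddCommGroup M] [Module A M] [Module R M] [IsScalarTower R A M]
    [SMulCommClass R A M] (c d : Localization.AtPrime p) (a : A) (x : M) :
    (c ⊗ₜ[R] a : Localization.AtPrime p ⊗[R] A) • (d ⊗ₜ[R] x : Localization.AtPrime p ⊗[R] M)
      = (c * d) ⊗ₜ[R] (a • x) := rfl

theorem exists_kill {R : Type} [CommRing R] (S : Submonoid R)
    {P N N' : Type} [AddCommGroup P] [Module R P] [Module.Finite R P]
    [AddCommGroup N] [Module R N] [AddCommGroup N'] [Module R N']
    (l : N →ₗ[R] N') [IsLocalizedModule S l] (D : P →ₗ[R] N)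
    (h : l ∘ₗ D = 0) : ∃ s ∈ S, ∀ x, s • D x = 0 := by
  classical
  obtain ⟨T, hT⟩ := (Module.Finite.fg_top : (⊤ : Submodule R P).FG)
  have h1 : ∀ x, ∃ s : S, s • D x = 0 := fun x =>
    (IsLocalizedModule.eq_zero_iff S l).1 (LinearMap.congr_fun h x)
  choose s hs using h1
  refine ⟨((∏ x ∈ T, s x : S) : R), SetLike.coe_mem _, fun x => ?_⟩
  have hx : x ∈ Submodule.span R (T : Set P) := by rw [hT]; trivial
  induction hx using Submodule.span_induction with
  | mem x hx =>
    obtain ⟨u, hu⟩ := Finset.dvd_prod_of_mem s hx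
    have := hs x
    rw [Submonoid.smul_def] at this
    rw [hu, Submonoid.coe_mul, mul_comm, mul_smul, this, smul_zero]
  | zero => simp
  | add x y _ _ hx hy => rw [map_add, smul_add, hx, hy, add_zero]
  | smul r x _ hx => rw [map_smul, smul_comm, hx, smul_zero]

theorem loc_ringhom_smul
    (R : Type) [CommRing R] (A : Type) [Ring A] [Algebra R A]
    (p : Ideal R) [p.IsPrime]
    (M : Type) [AddCommGroup M] [Module A M] [Module R M] [IsScalarTower R A M]
    [SMulCommClass R A M] (r : R) (x : M) :
    (1 ⊗ₜ[R] (r • x) : Localization.AtPrime p ⊗[R] M) =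
      (algebraMap R (Localization.AtPrime p ⊗[R] A) r) • (1 ⊗ₜ[R] x) := by
  rw [Algebra.TensorProduct.algebraMap_apply, loc_smul_tmul, one_smul, mul_one,
    Algebra.algebraMap_eq_smul_one, TensorProduct.smul_tmul]

/-- Base change of an `A`-linear functional. -/
noncomputable def locFunctional
    (R : Type) [CommRing R] (A : Type) [Ring A] [Algebra R A]
    (p : Ideal R) [p.IsPrime]
    (M : Type) [AddCommGroup M] [Module A M] [Module R M] [IsScalarTower R A M]
    [SMulCommClass R A M] (φ : M →ₗ[A] A) :
    (Localization.AtPrime p ⊗[R] M) →ₗ[Localization.AtPrime p ⊗[R] A]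
      (Localization.AtPrime p ⊗[R] A) where
  toFun := LinearMap.lTensor (Localization.AtPrime p) (φ.restrictScalars R)
  map_add' := map_add _
  map_smul' b y := by
    induction b using TensorProduct.induction_on with
    | zero =>
      have h0 : (0 : Localization.AtPrime p ⊗[R] A) • y = 0 :=
        (locModule R A p M).zero_smul y
      exact (congrArg _ h0).trans ((map_zero _).trans (zero_mul (M₀ := Localization.AtPrime p ⊗[R] A) _).symm)
    | add b c hb hc => rw [add_smul, map_add, hb, hc, ← add_smul]; rfl
    | tmul c a =>
      induction y using TensorProduct.induction_on with
      | zero => rw [smul_zero, map_zero, smul_zero]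
      | add y z hy hz => rw [smul_add, map_add, hy, hz, map_add, smul_add]
      | tmul d x =>
        rw [loc_smul_tmul, LinearMap.lTensor_tmul, LinearMap.lTensor_tmul]
        simp [smul_eq_mul]

theorem loc_projective
    (R : Type) [CommRing R] (A : Type) [Ring A] [Algebra R A]
    (p : Ideal R) [p.IsPrime]
    (M : Type) [AddCommGroup M] [Module A M] [Module R M] [IsScalarTower R A M]
    [SMulCommClass R A M] [Module.Finite A M] [Module.Projective A M] :
    Module.Projective (Localization.AtPrime p ⊗[R] A) (Localization.AtPrime p ⊗[R] M) := by
  obtain ⟨n, f, g, -, -, hfg⟩ := Module.Finite.exists_comp_eq_id_of_projective A M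
  refine Module.Projective.of_split
    (LinearMap.pi fun i : Fin n => locFunctional R A p M ((LinearMap.proj i).comp g))
    (Fintype.linearCombination (Localization.AtPrime p ⊗[R] A)
      (fun i : Fin n => (1 : Localization.AtPrime p) ⊗ₜ[R] f (Pi.single i 1))) ?_
  ext y
  rw [LinearMap.comp_apply, Fintype.linearCombination_apply, LinearMap.id_apply]
  simp only [LinearMap.pi_apply]
  induction y using TensorProduct.induction_on with
  | zero =>
    simp only [map_zero]
    exact Finset.sum_eq_zero fun i _ => (locModule R A p M).zero_smul _
  | add y z hy hz => simp only [map_add, add_smul, Finset.sum_add_distrib, hy, hz]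
  | tmul c x =>
    have h1 : ∀ i, locFunctional R A p M ((LinearMap.proj i).comp g) (c ⊗ₜ[R] x) =
      c ⊗ₜ[R] (g x i) := fun i => rfl
    simp only [h1, loc_smul_tmul, mul_one]
    rw [← TensorProduct.tmul_sum]
    congr 1
    simp only [← map_smul, ← map_sum]
    conv_rhs => rw [← LinearMap.id_apply (R := A) x, ← hfg, LinearMap.comp_apply]
    congr 1
    ext j
    simp [Finset.sum_apply, Pi.single_apply]

theorem exists_split_away
    (R : Type) [CommRing R] [IsNoetherianRing R] (A : Type) [Ring A] [Algebra R A]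
    [Module.Finite R A]
    (p : Ideal R) [p.IsPrime]
    (M : Type) [AddCommGroup M] [Module A M] [Module R M] [IsScalarTower R A M]
    [SMulCommClass R A M] [Module.Finite A M]
    [Module.Projective (Localization.AtPrime p ⊗[R] A) (Localization.AtPrime p ⊗[R] M)]
    {n : ℕ} (f : (Fin n → A) →ₗ[A] M) (hf : Function.Surjective f) :
    ∃ s ∈ p.primeCompl, ∃ g : M →ₗ[A] (Fin n → A), ∀ x, f (g x) = s • x := by
  have : Module.Finite R M := Module.Finite.trans A M
  have : Module.FinitePresentation R M := Module.finitePresentation_of_finite R M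
  let F := Fintype.linearCombination (Localization.AtPrime p ⊗[R] A)
      (fun i : Fin n => (1 : Localization.AtPrime p) ⊗ₜ[R] f (Pi.single i 1))
  let l : (Fin n → A) →ₗ[R] (Fin n → Localization.AtPrime p ⊗[R] A) :=
    LinearMap.pi fun i => (TensorProduct.mk R (Localization.AtPrime p) A 1) ∘ₗ LinearMap.proj i
  have : IsLocalizedModule p.primeCompl l :=
    IsLocalizedModule.pi p.primeCompl
      (fun _ : Fin n => TensorProduct.mk R (Localization.AtPrime p) A 1)
  have hFl : ∀ y, F (l y) = 1 ⊗ₜ[R] f y := by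
    intro y
    have h1 : ∀ i, l y i = 1 ⊗ₜ[R] y i := fun i => rfl
    rw [Fintype.linearCombination_apply]
    simp only [h1, loc_smul_tmul, mul_one]
    rw [← TensorProduct.tmul_sum]
    congr 1
    simp only [← map_smul, ← map_sum]
    congr 1
    ext j
    simp [Finset.sum_apply, Pi.single_apply]
  have hF : Function.Surjective F := by
    rw [← LinearMap.range_eq_top, eq_top_iff]
    rintro y -
    induction y using TensorProduct.induction_on with
    | zero => exact zero_mem _
    | add y z hy hz => exact add_mem hy hz
    | tmul c x =>
      obtain ⟨w, rfl⟩ := hf x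
      refine ⟨(c ⊗ₜ[R] (1 : A)) • l w, ?_⟩
      rw [map_smul, hFl, loc_smul_tmul, one_smul, mul_one]
  obtain ⟨G, hG⟩ := Module.projective_lifting_property F LinearMap.id hF
  let G0 : M →ₗ[R] (Fin n → Localization.AtPrime p ⊗[R] A) :=
    { toFun := fun x => G (1 ⊗ₜ[R] x)
      map_add' := fun x y => by rw [TensorProduct.tmul_add, map_add]
      map_smul' := fun r x => by
        rw [loc_ringhom_smul R A p M, map_smul, algebraMap_smul]; rfl }
  obtain ⟨g0, s, hs⟩ := Module.FinitePresentation.exists_lift_of_isLocalizedModule p.primeCompl l G0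
  have hs' : ∀ x, l (g0 x) = (s : R) • G (1 ⊗ₜ[R] x) := fun x => LinearMap.congr_fun hs x
  have hla : ∀ (a : A) y, l (a • y) = ((1 : Localization.AtPrime p) ⊗ₜ[R] a) • l y := by
    intro a y
    ext i
    change (1 : Localization.AtPrime p) ⊗ₜ[R] (a * y i) = (1 ⊗ₜ[R] a) * (1 ⊗ₜ[R] y i)
    simp
  let B : A →ₗ[R] M →ₗ[R] (Fin n → A) :=
    LinearMap.mk₂ R (fun a x => g0 (a • x) - a • g0 x)
      (fun a b x => by simp only [add_smul, map_add]; abel)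
      (fun r a x => by simp only [smul_assoc, map_smul, smul_sub])
      (fun a x y => by simp only [smul_add, map_add]; abel)
      (fun r a x => by simp only [smul_comm _ r, map_smul, smul_sub])
  obtain ⟨t, ht, htB⟩ := exists_kill p.primeCompl l (TensorProduct.lift B) (by
    refine TensorProduct.ext' fun a x => ?_
    change l (g0 (a • x) - a • g0 x) = 0
    have : (1 : Localization.AtPrime p) ⊗ₜ[R] (a • x)
        = ((1 : Localization.AtPrime p) ⊗ₜ[R] a) • ((1 : Localization.AtPrime p) ⊗ₜ[R] x) := by
      rw [loc_smul_tmul, one_mul]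
    rw [map_sub, hla, hs', hs', this, map_smul, sub_eq_zero, smul_comm])
  let g1 : M →ₗ[A] (Fin n → A) :=
    { toFun := fun x => t • g0 x
      map_add' := fun x y => by rw [map_add, smul_add]
      map_smul' := fun a x => by
        have : t • (g0 (a • x) - a • g0 x) = 0 := htB (a ⊗ₜ[R] x)
        rw [smul_sub, sub_eq_zero] at this
        rw [this, smul_comm]; rfl }
  obtain ⟨u, hu, huD⟩ := exists_kill p.primeCompl (TensorProduct.mk R (Localization.AtPrime p) M 1)
    ((f.restrictScalars R) ∘ₗ g0 - (s : R) • LinearMap.id) (by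
      ext x
      change (1 : Localization.AtPrime p) ⊗ₜ[R] (f (g0 x) - (s : R) • x) = 0
      rw [TensorProduct.tmul_sub, ← hFl, hs', loc_ringhom_smul R A p M,
        ← algebraMap_smul (Localization.AtPrime p ⊗[R] A) (s : R), map_smul, sub_eq_zero]
      congr 1
      exact LinearMap.congr_fun hG _)
  refine ⟨u * t * s, mul_mem (mul_mem hu ht) s.2, u • g1, fun x => ?_⟩
  have h := huD x
  have h' : u • (f (g0 x) - (s : R) • x) = 0 := h
  rw [smul_sub, sub_eq_zero] at h'
  change (f.restrictScalars R) (u • t • g0 x) = _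
  rw [map_smul, map_smul, smul_comm]
  change t • u • f (g0 x) = _
  rw [h', smul_smul, smul_smul]
  congr 1
  ring

end Helpers

open TensorProduct in
/-- let `R` be a commutative noetherian ring, `A` a finite `R`-algebra, and
`M` a finitely generated `A`-module.  Then `M` is projective over `A` if and only if
`M_𝔪 = R_𝔪 ⊗_R M` is projective over `A_𝔪 = R_𝔪 ⊗_R A` for every maximal ideal `𝔪`
of `R`. -/
theorem projective_local
    (R : Type) [CommRing R] [IsNoetherianRing R]
    (A : Type) [Ring A] [Algebra R A] [Module.Finite R A]
    (M : Type) [AddCommGroup M] [Module A M] [Module.Finite A M]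
    [Module R M] [IsScalarTower R A M] [SMulCommClass R A M] :
    Module.Projective A M ↔
      ∀ (m : Ideal R) (_ : m.IsMaximal),
        Module.Projective (Localization.AtPrime m ⊗[R] A)
          (Localization.AtPrime m ⊗[R] M) := by
  constructor
  · intro h m hm
    exact loc_projective R A m M
  · intro H
    obtain ⟨n, f, hf⟩ := Module.Finite.exists_fin' A M
    let I : Ideal R :=
      { carrier := {r | ∃ g : M →ₗ[A] (Fin n → A), ∀ x, f (g x) = r • x}
        zero_mem' := ⟨0, fun x => by simp⟩
        add_mem' := by
          rintro a b ⟨g, hg⟩ ⟨k, hk⟩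
          exact ⟨g + k, fun x => by rw [LinearMap.add_apply, map_add, hg, hk, add_smul]⟩
        smul_mem' := by
          rintro r a ⟨g, hg⟩
          refine ⟨r • g, fun x => ?_⟩
          change (f.restrictScalars R) (r • g x) = _
          rw [map_smul, smul_assoc, ← hg]; rfl }
    have hI : I = ⊤ := by
      by_contra hne
      obtain ⟨m, hm, hle⟩ := Ideal.exists_le_maximal I hne
      have := H m hm
      obtain ⟨s, hs, hg⟩ := exists_split_away R A m M f hf
      exact hs (hle hg)
    obtain ⟨g, hg⟩ : (1 : R) ∈ I := by rw [hI]; trivial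
    refine Module.Projective.of_split g f ?_
    ext x
    simp [hg]
end
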